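/- Let Ω ⊆ ℝ be open and let A₀, A₁, F₀, F₁, F₂ : Ω → Matrix N N ℂ be sufficiently differentiable matrix functions with A₁(t) invertible for all t ∈ Ω. Define the operators 𝒜(y) = yA₀ + y'A₁ and D(y) = yF₀ + y'F₁ + y''F₂, and set B₁ = A₁⁻¹F₂, B₀ = A₁⁻¹(F₁ − A₀B₁ − A₁'B₁), ℬ(y) = yB₀ + y'B₁, and Ψ = A₀B₀ + A₀'B₁ − F₀. Then: (i) D(y) = ℬ(𝒜(y)) − yΨ for every twice differentiable y : Ω → Matrix N N ℂ. (ii) Define 𝒟(y) = 𝒜(ℬ(y)) − yA₁⁻¹ΨA₁. If P : Ω → Matrix N N ℂ is twice differentiable with D(P) = Γ·P for some constant matrix Γ and P(t) is invertible for every t ∈ Ω, and 𝒫 = 𝒜(P), then 𝒟(𝒫) = Γ·𝒫 if and only if ΨA₀ + Ψ'A₁ = A₀A₁⁻¹ΨA₁ (i.e. 𝒜(Ψ) = A₀A₁⁻¹ΨA₁). -/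

import Mathlib

/-!
Part (i) is the Leibniz rule: expanding `ℬ(𝒜(y))` and comparing coefficients of `y`, `y'`, `y''`
gives `A₀B₀ + A₀'B₁ = F₀ + Ψ`, `A₁B₀ + A₀B₁ + A₁'B₁ = F₁` and `A₁B₁ = F₂`.

For part (ii), (i) turns `D(P) = ΓP` into `ℬ(𝒜(P)) = ΓP + PΨ` on `Ω`; since `Ω` is open, this
identity may be differentiated. Applying `𝒜` gives
`𝒟(𝒜(P)) = Γ𝒜(P) + P(ΨA₀ + Ψ'A₁ - A₀A₁⁻¹ΨA₁)`, as the `P'` terms cancel, and `P` is invertible.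
The differentiability of `Ψ` this needs follows from that of `A₁⁻¹`, by Cramer's rule
(`MatDiffAt.inv`).
-/

open Matrix

noncomputable section

abbrev Mat (N : ℕ) := Matrix (Fin N) (Fin N) ℂ

/-- Entrywise derivative of a matrix-valued function. -/
def matDeriv {N : ℕ} (f : ℝ → Mat N) : ℝ → Mat N :=
  fun t => Matrix.of fun i j => deriv (fun s => f s i j) t

/-- `f` is (entrywise) differentiable at every point of `Ω`. -/
def DiffOn {N : ℕ} (Ω : Set ℝ) (f : ℝ → Mat N) : Prop :=
  ∀ (i j : Fin N), ∀ t ∈ Ω, DifferentiableAt ℝ (fun s => f s i j) t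

/-- `f` is (entrywise) twice differentiable at every point of `Ω`. -/
def TwiceDiffOn {N : ℕ} (Ω : Set ℝ) (f : ℝ → Mat N) : Prop :=
  DiffOn Ω f ∧ DiffOn Ω (matDeriv f)

/-- first order operator `𝒜(y) = yA₀ + y'A₁` (acting on the right). -/
def firstOrd {N : ℕ} (A₀ A₁ : ℝ → Mat N) (y : ℝ → Mat N) : ℝ → Mat N :=
  fun t => y t * A₀ t + matDeriv y t * A₁ t

/-- second order operator `D(y) = yF₀ + y'F₁ + y''F₂` (acting on the right). -/
def secondOrd {N : ℕ} (F₀ F₁ F₂ : ℝ → Mat N) (y : ℝ → Mat N) : ℝ → Mat N :=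
  fun t => y t * F₀ t + matDeriv y t * F₁ t + matDeriv (matDeriv y) t * F₂ t

/-- Entrywise differentiability of a matrix-valued function at a single point, the pointwise form
of `DiffOn`. -/
def MatDiffAt {N : ℕ} (f : ℝ → Mat N) (t : ℝ) : Prop :=
  ∀ i j, DifferentiableAt ℝ (fun s => f s i j) t

section MatDiffAt

variable {N : ℕ} {f g : ℝ → Mat N} {t : ℝ}

theorem MatDiffAt.add (hf : MatDiffAt f t) (hg : MatDiffAt g t) :
    MatDiffAt (fun s => f s + g s) t :=
  fun i j => (hf i j).fun_add (hg i j)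

theorem MatDiffAt.sub (hf : MatDiffAt f t) (hg : MatDiffAt g t) :
    MatDiffAt (fun s => f s - g s) t :=
  fun i j => (hf i j).fun_sub (hg i j)

theorem MatDiffAt.mul (hf : MatDiffAt f t) (hg : MatDiffAt g t) :
    MatDiffAt (fun s => f s * g s) t := by
  intro i j
  simp only [Matrix.mul_apply]
  exact DifferentiableAt.fun_sum fun k _ => (hf i k).fun_mul (hg k j)

theorem MatDiffAt.const (C : Mat N) : MatDiffAt (fun _ => C) t :=
  fun _ _ => differentiableAt_const _

theorem MatDiffAt.det (hf : MatDiffAt f t) : DifferentiableAt ℝ (fun s => (f s).det) t := by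
  simp only [Matrix.det_apply']
  exact DifferentiableAt.fun_sum fun σ _ =>
    (differentiableAt_const _).fun_mul (DifferentiableAt.fun_finsetProd fun i _ => hf _ _)

theorem MatDiffAt.adjugate (hf : MatDiffAt f t) : MatDiffAt (fun s => (f s).adjugate) t := by
  intro i j
  simp only [Matrix.adjugate_apply]
  refine MatDiffAt.det fun k l => ?_
  simp only [Matrix.updateRow_apply]
  split_ifs
  · exact differentiableAt_const _
  · exact hf k l

theorem MatDiffAt.inv (hf : MatDiffAt f t) (h : IsUnit (f t)) :
    MatDiffAt (fun s => (f s)⁻¹) t := by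
  intro i j
  simp only [Matrix.inv_def, Ring.inverse_eq_inv', Matrix.smul_apply, smul_eq_mul]
  exact (hf.det.fun_inv ((Matrix.isUnit_iff_isUnit_det _).1 h).ne_zero).fun_mul (hf.adjugate i j)

theorem matDeriv_add (hf : MatDiffAt f t) (hg : MatDiffAt g t) :
    matDeriv (fun s => f s + g s) t = matDeriv f t + matDeriv g t := by
  ext i j
  exact deriv_fun_add (hf i j) (hg i j)

theorem matDeriv_mul (hf : MatDiffAt f t) (hg : MatDiffAt g t) :
    matDeriv (fun s => f s * g s) t = matDeriv f t * g t + f t * matDeriv g t := by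
  ext i j
  simp only [matDeriv, Matrix.of_apply, Matrix.mul_apply, Matrix.add_apply]
  rw [deriv_fun_sum fun k _ => (hf i k).fun_mul (hg k j), ← Finset.sum_add_distrib]
  exact Finset.sum_congr rfl fun k _ => deriv_fun_mul (hf i k) (hg k j)

theorem matDeriv_const (C : Mat N) : matDeriv (fun _ => C) t = 0 := by
  ext i j
  simp [matDeriv]

theorem matDeriv_congr {Ω : Set ℝ} (hΩ : IsOpen Ω) (ht : t ∈ Ω) (h : ∀ s ∈ Ω, f s = g s) :
    matDeriv f t = matDeriv g t := by
  ext i j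
  refine Filter.EventuallyEq.deriv_eq ?_
  filter_upwards [hΩ.mem_nhds ht] with s hs
  rw [h s hs]

end MatDiffAt

/-- **quasi-Darboux factorization.** With `B₁ = A₁⁻¹F₂`,
`B₀ = A₁⁻¹(F₁ − A₀B₁ − A₁'B₁)`, `ℬ(y) = yB₀ + y'B₁` and `Ψ = A₀B₀ + A₀'B₁ − F₀`:
(i) `D(y) = ℬ(𝒜(y)) − yΨ` on `Ω` for every twice differentiable `y`; and
(ii) if `D(P) = Γ·P` with `P` invertible on `Ω`, and `𝒫 = 𝒜(P)`, then
`𝒟(𝒫) = Γ·𝒫` (with `𝒟(y) = 𝒜(ℬ(y)) − yA₁⁻¹ΨA₁`) iff `ΨA₀ + Ψ'A₁ = A₀A₁⁻¹ΨA₁` on `Ω`. -/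
theorem quasi_darboux_factorization
    (N : ℕ) (Ω : Set ℝ) (hΩ : IsOpen Ω)
    (A₀ A₁ F₀ F₁ F₂ : ℝ → Mat N)
    (hA₀ : TwiceDiffOn Ω A₀) (hA₁ : TwiceDiffOn Ω A₁)
    (hF₀ : DiffOn Ω F₀) (hF₁ : DiffOn Ω F₁) (hF₂ : DiffOn Ω F₂)
    (hA₁inv : ∀ t ∈ Ω, IsUnit (A₁ t))
    (B₀ B₁ Ψ : ℝ → Mat N)
    (hB₁ : B₁ = fun t => (A₁ t)⁻¹ * F₂ t)
    (hB₀ : B₀ = fun t => (A₁ t)⁻¹ * (F₁ t - A₀ t * B₁ t - matDeriv A₁ t * B₁ t))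
    (hΨ : Ψ = fun t => A₀ t * B₀ t + matDeriv A₀ t * B₁ t - F₀ t) :
    -- (i) the factorization `D(y) = ℬ(𝒜(y)) − yΨ` on `Ω`
    (∀ y : ℝ → Mat N, TwiceDiffOn Ω y → ∀ t ∈ Ω,
      secondOrd F₀ F₁ F₂ y t
        = firstOrd B₀ B₁ (firstOrd A₀ A₁ y) t - y t * Ψ t) ∧
    -- (ii) the eigenfunction transfer criterion
    (∀ (P : ℝ → Mat N) (Γ : Mat N), TwiceDiffOn Ω P →
      (∀ t ∈ Ω, IsUnit (P t)) →
      (∀ t ∈ Ω, secondOrd F₀ F₁ F₂ P t = Γ * P t) →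
      ((∀ t ∈ Ω,
          firstOrd A₀ A₁ (firstOrd B₀ B₁ (firstOrd A₀ A₁ P)) t
            - firstOrd A₀ A₁ P t * ((A₁ t)⁻¹ * Ψ t * A₁ t)
          = Γ * firstOrd A₀ A₁ P t)
        ↔ (∀ t ∈ Ω,
          Ψ t * A₀ t + matDeriv Ψ t * A₁ t = A₀ t * (A₁ t)⁻¹ * Ψ t * A₁ t))) := by
  have dA₀ : ∀ t ∈ Ω, MatDiffAt A₀ t := fun t ht i j => hA₀.1 i j t ht
  have dA₁ : ∀ t ∈ Ω, MatDiffAt A₁ t := fun t ht i j => hA₁.1 i j t ht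
  have dA₀' : ∀ t ∈ Ω, MatDiffAt (matDeriv A₀) t := fun t ht i j => hA₀.2 i j t ht
  have dA₁' : ∀ t ∈ Ω, MatDiffAt (matDeriv A₁) t := fun t ht i j => hA₁.2 i j t ht
  have dB₁ : ∀ t ∈ Ω, MatDiffAt B₁ t := fun t ht => by
    rw [hB₁]
    exact ((dA₁ t ht).inv (hA₁inv t ht)).mul fun i j => hF₂ i j t ht
  have dB₀ : ∀ t ∈ Ω, MatDiffAt B₀ t := fun t ht => by
    rw [hB₀]
    have dF₁ : MatDiffAt F₁ t := fun i j => hF₁ i j t ht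
    exact ((dA₁ t ht).inv (hA₁inv t ht)).mul
      ((dF₁.sub ((dA₀ t ht).mul (dB₁ t ht))).sub ((dA₁' t ht).mul (dB₁ t ht)))
  have dΨ : ∀ t ∈ Ω, MatDiffAt Ψ t := fun t ht => by
    rw [hΨ]
    exact (((dA₀ t ht).mul (dB₀ t ht)).add ((dA₀' t ht).mul (dB₁ t ht))).sub
      fun i j => hF₀ i j t ht
  have hcancel : ∀ t ∈ Ω, ∀ X : Mat N, A₁ t * ((A₁ t)⁻¹ * X) = X := fun t ht X =>
    Matrix.mul_nonsing_inv_cancel_left _ X ((Matrix.isUnit_iff_isUnit_det _).1 (hA₁inv t ht))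
  have part1 : ∀ y : ℝ → Mat N, TwiceDiffOn Ω y → ∀ t ∈ Ω,
      secondOrd F₀ F₁ F₂ y t = firstOrd B₀ B₁ (firstOrd A₀ A₁ y) t - y t * Ψ t := by
    intro y hy t ht
    have dy : MatDiffAt y t := fun i j => hy.1 i j t ht
    have dy' : MatDiffAt (matDeriv y) t := fun i j => hy.2 i j t ht
    have hd : matDeriv (firstOrd A₀ A₁ y) t
        = (matDeriv y t * A₀ t + y t * matDeriv A₀ t)
          + (matDeriv (matDeriv y) t * A₁ t + matDeriv y t * matDeriv A₁ t) := by
      unfold firstOrd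
      rw [matDeriv_add (dy.mul (dA₀ t ht)) (dy'.mul (dA₁ t ht)), matDeriv_mul dy (dA₀ t ht),
        matDeriv_mul dy' (dA₁ t ht)]
    have e0 : F₀ t = A₀ t * B₀ t + matDeriv A₀ t * B₁ t - Ψ t := by
      rw [hΨ]; exact (sub_sub_cancel _ _).symm
    have e1 : F₁ t = A₁ t * B₀ t + A₀ t * B₁ t + matDeriv A₁ t * B₁ t := by
      rw [hB₀]; simp only [hcancel t ht]; abel
    have e2 : F₂ t = A₁ t * B₁ t := by
      rw [hB₁]; simp only [hcancel t ht]
    have h1 : firstOrd B₀ B₁ (firstOrd A₀ A₁ y) t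
        = (y t * A₀ t + matDeriv y t * A₁ t) * B₀ t + matDeriv (firstOrd A₀ A₁ y) t * B₁ t := rfl
    rw [h1, hd, secondOrd, e0, e1, e2]
    noncomm_ring
  refine ⟨part1, fun P Γ hP hPinv hD => forall₂_congr fun t ht => ?_⟩
  have dP : MatDiffAt P t := fun i j => hP.1 i j t ht
  have hBA : ∀ s ∈ Ω, firstOrd B₀ B₁ (firstOrd A₀ A₁ P) s = Γ * P s + P s * Ψ s := fun s hs => by
    rw [← hD s hs, part1 P hP s hs, sub_add_cancel]
  have hBA' : matDeriv (firstOrd B₀ B₁ (firstOrd A₀ A₁ P)) t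
      = Γ * matDeriv P t + (matDeriv P t * Ψ t + P t * matDeriv Ψ t) := by
    rw [matDeriv_congr hΩ ht hBA,
      matDeriv_add ((MatDiffAt.const Γ).mul dP) (dP.mul (dΨ t ht)),
      matDeriv_mul (MatDiffAt.const Γ) dP, matDeriv_mul dP (dΨ t ht), matDeriv_const, zero_mul,
      zero_add]
  have h2 : firstOrd A₀ A₁ (firstOrd B₀ B₁ (firstOrd A₀ A₁ P)) t
      = firstOrd B₀ B₁ (firstOrd A₀ A₁ P) t * A₀ t
        + matDeriv (firstOrd B₀ B₁ (firstOrd A₀ A₁ P)) t * A₁ t := rfl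
  have h3 : firstOrd A₀ A₁ P t = P t * A₀ t + matDeriv P t * A₁ t := rfl
  have hc : matDeriv P t * A₁ t * ((A₁ t)⁻¹ * Ψ t * A₁ t) = matDeriv P t * Ψ t * A₁ t := by
    simp only [mul_assoc, hcancel t ht]
  have key : firstOrd A₀ A₁ (firstOrd B₀ B₁ (firstOrd A₀ A₁ P)) t
        - firstOrd A₀ A₁ P t * ((A₁ t)⁻¹ * Ψ t * A₁ t) - Γ * firstOrd A₀ A₁ P t
      = P t * (Ψ t * A₀ t + matDeriv Ψ t * A₁ t - A₀ t * (A₁ t)⁻¹ * Ψ t * A₁ t) := by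
    rw [h2, hBA t ht, hBA', h3, add_mul (P t * A₀ t) (matDeriv P t * A₁ t), hc]
    generalize (A₁ t)⁻¹ = C
    noncomm_ring
  rw [← sub_eq_zero, key, (hPinv t ht).mul_right_eq_zero, sub_eq_zero]
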